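/- Let φ ∈ L¹(ℝ) be non-degenerate, i.e. ∫_{−∞}^{0} e^{2πit} φ(t) dt ≠ 0, set h(u) = e^{2πiu} 𝟙_{[0,∞)}(u) and, for m ≤ −2, g_m = h∗φ_m where φ_m(x) = 2^m e^{2πi(1+2^m)x} φ(2^m x). Then for every family {Q_m}_{m ≤ −2} of affine functions Q_m(x) = α_m x + β_m (α_m, β_m ∈ ℂ), one has ∫_{0}^{1/2} ( Σ_{m ≤ −2} |g_m(x) − Q_m(x)|² )^{1/2} dx = ∞. (This is the key step showing that the Rubio de Francia operator without rotations associated with the collection {[1+2^m, 1+2^{m+1}]}_{m ≤ −2} is not bounded on BMO = Ḟ^0_{∞2}.) -/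

import Mathlib

/-!
Testing `g_m - Q_m` against `cos (4πx)`, which is orthogonal to the affine functions on `[0, 1/2]`
and bounded by `1`, gives `|∫ cos (4πx) g_m(x) dx| ≤ ‖g_m - Q_m‖_{L¹(0, 1/2)}`. Since
`g_m(x) = e^{2πix} ∫_{-∞}^{2^m x} e^{2πit} φ(t) dt`, the left side converges as `m → -∞` to
`|∫_0^{1/2} cos (4πx) e^{2πix} dx| · |∫_{-∞}^0 e^{2πit} φ(t) dt|`, which is nonzero. If the mixed
norm in the theorem were finite, Minkowski's inequality would make `‖g_m - Q_m‖_{L¹(0, 1/2)}`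
square-summable in `m`, hence tend to zero.
-/

open MeasureTheory Real Set Function
open scoped FourierTransform ENNReal NNReal

/-- `e2pi t = e^{2πit}`. -/
noncomputable def e2pi (t : ℝ) : ℂ := Complex.exp (2 * (Real.pi : ℂ) * Complex.I * (t : ℂ))

/-- Convolution of two functions on `ℝ`. -/
noncomputable def conv (f g : ℝ → ℂ) (x : ℝ) : ℂ := ∫ t, f t * g (x - t)

/-- The modulated Heaviside function `h(u) = e^{2πiu} 𝟙_{[0,∞)}(u)`. -/
noncomputable def heav : ℝ → ℂ := Set.indicator (Set.Ici (0:ℝ)) fun u => e2pi u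

/-- The function `φ_m` associated with the dyadic interval `[1+2^m, 1+2^{m+1}]`:
`φ_m(x) = 2^m e^{2πi(1+2^m)x} φ(2^m x)`. -/
noncomputable def phimDyadic (φ : ℝ → ℂ) (m : ℤ) (x : ℝ) : ℂ :=
  (((2:ℝ) ^ m : ℝ) : ℂ) * e2pi ((1 + (2:ℝ) ^ m) * x) * φ ((2:ℝ) ^ m * x)

open Filter Topology

section Minkowski

variable {ι X : Type*} [MeasurableSpace X] {μ : Measure X} {p : ℝ} {a : ι → X → ℝ≥0∞}

theorem rpow_one_div_le_of_le_rpow_one_div_mul {q : ℝ} (hpq : p.HolderConjugate q)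
    {S I : ℝ≥0∞} (hS : S ≠ ∞) (h : S ≤ S ^ (1 / q) * I) : S ^ (1 / p) ≤ I := by
  obtain rfl | hS0 := eq_or_ne S 0
  · simp [hpq.pos]
  have h_split : S ^ (1 / q) * S ^ (1 / p) = S := by
    rw [← ENNReal.rpow_add _ _ hS0 hS, one_div, one_div, hpq.symm.inv_add_inv_eq_one,
      ENNReal.rpow_one]
  have h_ne_zero : S ^ (1 / q) ≠ 0 := by simp [hS0, hS]
  have h_ne_top : S ^ (1 / q) ≠ ∞ :=
    ENNReal.rpow_ne_top_of_nonneg (one_div_nonneg.2 hpq.symm.nonneg) hS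
  exact (ENNReal.mul_le_mul_iff_right h_ne_zero h_ne_top).1 (h_split.trans_le h)

theorem sum_rpow_lintegral_le_lintegral_rpow_sum (s : Finset ι) (hp : 1 ≤ p)
    (ha : ∀ i ∈ s, AEMeasurable (a i) μ) :
    (∑ i ∈ s, (∫⁻ x, a i x ∂μ) ^ p) ^ (1 / p) ≤ ∫⁻ x, (∑ i ∈ s, a i x ^ p) ^ (1 / p) ∂μ := by
  obtain rfl | hp1 := hp.eq_or_lt
  · simp [lintegral_finsetSum' s ha]
  have hpq := Real.HolderConjugate.conjExponent hp1
  set q := p.conjExponent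
  set A : ι → ℝ≥0∞ := fun i ↦ ∫⁻ x, a i x ∂μ
  set S := ∑ i ∈ s, A i ^ p
  set I := ∫⁻ x, (∑ i ∈ s, a i x ^ p) ^ (1 / p) ∂μ
  obtain hI | hI := eq_or_ne I ∞
  · exact hI ▸ le_top
  have hA : ∀ i ∈ s, A i ≤ I := fun i hi ↦ lintegral_mono fun x ↦ by
    rw [one_div, ENNReal.le_rpow_inv_iff hpq.pos]
    exact Finset.single_le_sum (f := fun i ↦ a i x ^ p) (fun _ _ ↦ zero_le) hi
  have hS_top : S ≠ ∞ := ENNReal.sum_ne_top.2 fun i hi ↦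
    ENNReal.rpow_ne_top_of_nonneg hpq.nonneg (ne_top_of_le_ne_top hI (hA i hi))
  refine rpow_one_div_le_of_le_rpow_one_div_mul hpq hS_top ?_
  -- Hölder with the weights `A i ^ (p - 1)`, which attain the `ℓᵖ` norm of `A` by duality.
  calc
    S = ∑ i ∈ s, ∫⁻ x, A i ^ (p - 1) * a i x ∂μ := Finset.sum_congr rfl fun i hi ↦ by
      rw [lintegral_const_mul'' _ (ha i hi)]
      nth_rw 1 [← sub_add_cancel p 1]
      rw [ENNReal.rpow_add_of_nonneg _ _ (by linarith) zero_le_one, ENNReal.rpow_one]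
    _ = ∫⁻ x, ∑ i ∈ s, A i ^ (p - 1) * a i x ∂μ :=
      (lintegral_finsetSum' s fun i hi ↦ (ha i hi).const_mul _).symm
    _ ≤ ∫⁻ x, S ^ (1 / q) * (∑ i ∈ s, a i x ^ p) ^ (1 / p) ∂μ := lintegral_mono fun x ↦ by
      have h := ENNReal.inner_le_Lp_mul_Lq s (fun i ↦ A i ^ (p - 1)) (fun i ↦ a i x) hpq.symm
      simpa only [← ENNReal.rpow_mul, hpq.sub_one_mul_conj] using h
    _ = S ^ (1 / q) * I := lintegral_const_mul' _ _ (ENNReal.rpow_ne_top_of_nonneg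
      (one_div_nonneg.2 hpq.symm.nonneg) hS_top)

theorem tsum_rpow_lintegral_le_lintegral_rpow_tsum (hp : 1 ≤ p)
    (ha : ∀ i, AEMeasurable (a i) μ) :
    (∑' i, (∫⁻ x, a i x ∂μ) ^ p) ^ (1 / p) ≤ ∫⁻ x, (∑' i, a i x ^ p) ^ (1 / p) ∂μ := by
  have hp0 : 0 < p := by positivity
  rw [one_div, ENNReal.rpow_inv_le_iff hp0]
  refine ENNReal.summable.tsum_le_of_sum_le fun s ↦ ?_
  rw [← ENNReal.rpow_inv_le_iff hp0, ← one_div]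
  refine (sum_rpow_lintegral_le_lintegral_rpow_sum s hp fun i _ ↦ ha i).trans ?_
  gcongr
  exact ENNReal.sum_le_tsum s

theorem tendsto_cofinite_lintegral_zero_of_lintegral_rpow_tsum_ne_top (hp : 1 ≤ p)
    (ha : ∀ i, AEMeasurable (a i) μ) (h : ∫⁻ x, (∑' i, a i x ^ p) ^ (1 / p) ∂μ ≠ ∞) :
    Tendsto (fun i ↦ ∫⁻ x, a i x ∂μ) cofinite (𝓝 0) := by
  have hp0 : 0 < p := by positivity
  have h_sum : ∑' i, (∫⁻ x, a i x ∂μ) ^ p ≠ ∞ := by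
    have h_root := ne_top_of_le_ne_top h (tsum_rpow_lintegral_le_lintegral_rpow_tsum hp ha)
    contrapose h_root
    simp [h_root, hp0]
  have h_root := (ENNReal.tendsto_cofinite_zero_of_tsum_ne_top h_sum).ennrpow_const (1 / p)
  simpa [← ENNReal.rpow_mul, hp0, hp0.ne'] using h_root

end Minkowski

theorem enorm_integral_smul_le_lintegral_enorm_sub {X E : Type*} [MeasurableSpace X]
    {μ : Measure X} [NormedAddCommGroup E] [NormedSpace ℝ E] {w : X → ℝ} {g q : X → E}
    (hw : ∀ x, |w x| ≤ 1) (hg : Integrable (fun x ↦ w x • g x) μ)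
    (hq : Integrable (fun x ↦ w x • q x) μ) (hwq : ∫ x, w x • q x ∂μ = 0) :
    ‖∫ x, w x • g x ∂μ‖ₑ ≤ ∫⁻ x, ‖g x - q x‖ₑ ∂μ := by
  have h_sub : ∫ x, w x • g x ∂μ = ∫ x, w x • (g x - q x) ∂μ := by
    simp_rw [smul_sub]
    rw [integral_sub hg hq, hwq, sub_zero]
  rw [h_sub]
  refine (enorm_integral_le_lintegral_enorm _).trans (lintegral_mono fun x ↦ ?_)
  rw [enorm_le_iff_norm_le, norm_smul]
  exact mul_le_of_le_one_left (norm_nonneg _) (hw x)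

theorem integral_cos_smul_affine_eq_zero {E : Type*} [NormedAddCommGroup E] [NormedSpace ℝ E]
    [CompleteSpace E] {ω T : ℝ} (hω : ω ≠ 0) (hT : cos (ω * T) = 1) (a b : E) :
    ∫ x in 0..T, cos (ω * x) • (x • a + b) = 0 := by
  have h_sin : sin (ω * T) = 0 := by
    simpa [hT] using Real.sin_sq_add_cos_sq (ω * T)
  have h_deriv (x : ℝ) : HasDerivAt
      (fun x ↦ (sin (ω * x) / ω) • (x • a + b) + (cos (ω * x) / ω ^ 2) • a)
      (cos (ω * x) • (x • a + b)) x := by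
    have hωx : HasDerivAt (fun x ↦ ω * x) ω x := by
      simpa using (hasDerivAt_id x).const_mul ω
    refine (((hωx.sin.div_const ω).smul (((hasDerivAt_id x).smul_const a).add_const b)).add
      ((hωx.cos.div_const (ω ^ 2)).smul_const a)).congr_deriv ?_
    simp only [id]
    match_scalars
    · field_simp
      ring
    · field_simp
  rw [intervalIntegral.integral_eq_sub_of_hasDerivAt (fun x _ ↦ h_deriv x)
    (Continuous.intervalIntegrable (by fun_prop) _ _)]
  simp [h_sin, hT]

theorem enorm_integral_cos_smul_le_lintegral_enorm_sub_affine {E : Type*} [NormedAddCommGroup E]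
    [NormedSpace ℝ E] [CompleteSpace E] {ω T : ℝ} (hω : ω ≠ 0) (hT : cos (ω * T) = 1)
    (hT0 : 0 ≤ T) {g : ℝ → E} (hg : Continuous g) (a b : E) :
    ‖∫ x in 0..T, cos (ω * x) • g x‖ₑ ≤ ∫⁻ x in Icc 0 T, ‖g x - (x • a + b)‖ₑ := by
  have h_orth := integral_cos_smul_affine_eq_zero hω hT a b
  rw [intervalIntegral.integral_of_le hT0, restrict_Ioc_eq_restrict_Icc] at h_orth ⊢
  exact enorm_integral_smul_le_lintegral_enorm_sub (fun x ↦ abs_cos_le_one _)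
    (Continuous.integrableOn_Icc (by fun_prop)) (Continuous.integrableOn_Icc (by fun_prop)) h_orth

theorem tendsto_intervalIntegral_mul_comp_mul_nhds_zero {𝕜 : Type*} [RCLike 𝕜] {w P : ℝ → 𝕜}
    (hw : Continuous w) (hP : Continuous P) (a b : ℝ) :
    Tendsto (fun s ↦ ∫ x in a..b, w x * P (s * x)) (𝓝 0) (𝓝 ((∫ x in a..b, w x) * P 0)) := by
  have h_cont : Continuous fun s ↦ ∫ x in a..b, w x * P (s * x) :=
    intervalIntegral.continuous_parametric_intervalIntegral_of_continuous'
      (by simp only [uncurry_def]; fun_prop) a b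
  simpa [intervalIntegral.integral_mul_const] using h_cont.tendsto 0

theorem continuous_setIntegral_Iic {E : Type*} [NormedAddCommGroup E] [NormedSpace ℝ E]
    {f : ℝ → E} (hf : Integrable f) : Continuous fun y ↦ ∫ t in Iic y, f t := by
  have h_split (y : ℝ) : ∫ t in Iic y, f t = (∫ t in Iic 0, f t) + ∫ t in 0..y, f t := by
    rw [← intervalIntegral.integral_Iic_sub_Iic hf.integrableOn hf.integrableOn, add_sub_cancel]
  rw [funext h_split]
  exact continuous_const.add
    (intervalIntegral.continuous_primitive (fun _ _ ↦ hf.intervalIntegrable) 0)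

theorem tendsto_zpow_atBot_nhds_zero {r : ℝ} (hr : 1 < r) :
    Tendsto (fun m : ℤ ↦ r ^ m) atBot (𝓝 0) := by
  have h_exp (m : ℤ) : r ^ m = exp (log r * m) := by
    rw [← Real.rpow_def_of_pos (by positivity), Real.rpow_intCast]
  simp_rw [h_exp]
  exact tendsto_exp_atBot.comp
    ((tendsto_intCast_atBot_iff.2 tendsto_id).const_mul_atBot (log_pos hr))

theorem tendsto_subtype_val_cofinite_atBot {ι : Type*} [LinearOrder ι]
    [LocallyFiniteOrder ι] (b : ι) :
    Tendsto (Subtype.val : {m : ι // m ≤ b} → ι) cofinite atBot := by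
  refine tendsto_atBot.2 fun c ↦ ?_
  refine ((finite_Icc c b).preimage Subtype.val_injective.injOn).subset fun m hm ↦ ?_
  exact ⟨le_of_not_ge hm, m.2⟩

theorem e2pi_eq_fourierChar (t : ℝ) : e2pi t = 𝐞 t := by
  rw [e2pi, Real.fourierChar_apply]
  push_cast
  ring_nf

theorem continuous_e2pi : Continuous e2pi := by
  unfold e2pi
  fun_prop

theorem e2pi_add (s t : ℝ) : e2pi (s + t) = e2pi s * e2pi t := by
  simp [e2pi_eq_fourierChar, AddChar.map_add_eq_mul]

theorem e2pi_neg (t : ℝ) : e2pi (-t) = (e2pi t)⁻¹ := by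
  simp [e2pi_eq_fourierChar, AddChar.map_neg_eq_inv]

theorem norm_e2pi (t : ℝ) : ‖e2pi t‖ = 1 := by
  rw [e2pi_eq_fourierChar, Circle.norm_coe]

theorem e2pi_one_half : e2pi (1 / 2) = -1 := by
  rw [← Complex.exp_pi_mul_I, e2pi]
  push_cast
  ring_nf

theorem cos_eq_e2pi_add_e2pi_neg (t : ℝ) : (cos (2 * π * t) : ℂ) = (e2pi t + e2pi (-t)) / 2 := by
  rw [Complex.ofReal_cos, Complex.cos, e2pi, e2pi]
  push_cast
  ring_nf

theorem integral_e2pi_mul {k : ℝ} (hk : k ≠ 0) (T : ℝ) :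
    ∫ x in 0..T, e2pi (k * x) = (e2pi (k * T) - 1) / (2 * π * Complex.I * k) := by
  have hc : (2 * π * Complex.I * k : ℂ) ≠ 0 := by simp [hk, pi_ne_zero]
  have h := integral_exp_mul_complex (a := 0) (b := T) hc
  simpa [e2pi, mul_assoc] using h

theorem integral_cos_smul_e2pi :
    ∫ x in (0 : ℝ)..(1 / 2), cos (4 * π * x) • e2pi x = 1 / (3 * π * Complex.I) := by
  have h_euler (x : ℝ) : cos (4 * π * x) • e2pi x = (e2pi (3 * x) + e2pi (-1 * x)) / 2 := by
    rw [Complex.real_smul, show 4 * π * x = 2 * π * (2 * x) by ring, cos_eq_e2pi_add_e2pi_neg,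
      show 3 * x = 2 * x + x by ring, show -1 * x = -(2 * x) + x by ring, e2pi_add, e2pi_add]
    ring
  have h_three : e2pi (3 * (1 / 2)) = -1 := by
    rw [show (3 * (1 / 2) : ℝ) = 1 / 2 + 1 / 2 + 1 / 2 by ring, e2pi_add, e2pi_add, e2pi_one_half]
    norm_num
  have h_neg_one : e2pi (-1 * (1 / 2)) = -1 := by
    rw [neg_one_mul, e2pi_neg, e2pi_one_half, inv_neg_one]
  have h_int (k : ℝ) : IntervalIntegrable (fun x ↦ e2pi (k * x)) volume 0 (1 / 2) :=
    (continuous_e2pi.comp (continuous_const_mul k)).intervalIntegrable _ _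
  simp_rw [h_euler]
  rw [intervalIntegral.integral_div, intervalIntegral.integral_add (h_int 3) (h_int (-1)),
    integral_e2pi_mul three_ne_zero, integral_e2pi_mul (neg_ne_zero.2 one_ne_zero), h_three,
    h_neg_one]
  have := pi_ne_zero
  push_cast
  field_simp
  norm_num

theorem integrable_e2pi_mul {φ : ℝ → ℂ} (hφ : Integrable φ) : Integrable fun t ↦ e2pi t * φ t :=
  hφ.bdd_mul (c := 1) continuous_e2pi.aestronglyMeasurable (.of_forall fun t ↦ (norm_e2pi t).le)

theorem conv_heav_phimDyadic (φ : ℝ → ℂ) (m : ℤ) (x : ℝ) :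
    conv heav (phimDyadic φ m) x = e2pi x * ∫ t in Iic ((2 : ℝ) ^ m * x), e2pi t * φ t := by
  have h_scale : (0 : ℝ) < 2 ^ m := by positivity
  set s : ℝ := 2 ^ m with hs
  set G : ℝ → ℂ := (Iic (s * x)).indicator fun t ↦ e2pi t * φ t with hG
  have h_integrand (u : ℝ) : heav (x - u) * phimDyadic φ m u = e2pi x * s * G (s * u) := by
    obtain hu | hu := le_or_gt u x
    · rw [heav, indicator_of_mem (mem_Ici.2 (sub_nonneg.2 hu)), hG,
        indicator_of_mem (mem_Iic.2 (by gcongr)), phimDyadic, ← hs, one_add_mul, e2pi_add,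
        ← sub_add_cancel x u, e2pi_add, sub_add_cancel]
      ring
    · rw [heav, indicator_of_notMem (by simpa using hu), hG,
        indicator_of_notMem (by simpa using by gcongr), zero_mul, mul_zero]
  calc conv heav (phimDyadic φ m) x
    _ = ∫ u, heav (x - u) * phimDyadic φ m u := by
      simpa [conv] using (integral_sub_left_eq_self
        (fun t ↦ heav t * phimDyadic φ m (x - t)) volume x).symm
    _ = e2pi x * s * ∫ u, G (s * u) := by simp_rw [h_integrand, integral_const_mul]
    _ = e2pi x * ∫ t, G t := by
      have hs_ne : (s : ℂ) ≠ 0 := by exact_mod_cast h_scale.ne'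
      rw [Measure.integral_comp_mul_left, abs_of_pos (inv_pos.2 h_scale), Complex.real_smul]
      push_cast
      field_simp
    _ = e2pi x * ∫ t in Iic (s * x), e2pi t * φ t := by
      rw [hG, integral_indicator measurableSet_Iic]

theorem continuous_setIntegral_Iic_e2pi_mul {φ : ℝ → ℂ} (hφ : Integrable φ) :
    Continuous fun y ↦ ∫ t in Iic y, e2pi t * φ t :=
  continuous_setIntegral_Iic (integrable_e2pi_mul hφ)

theorem continuous_conv_heav_phimDyadic {φ : ℝ → ℂ} (hφ : Integrable φ) (m : ℤ) :
    Continuous (conv heav (phimDyadic φ m)) := by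
  rw [funext (conv_heav_phimDyadic φ m)]
  exact continuous_e2pi.mul
    ((continuous_setIntegral_Iic_e2pi_mul hφ).comp (continuous_const_mul _))

theorem tendsto_integral_cos_smul_conv_heav_phimDyadic {φ : ℝ → ℂ} (hφ : Integrable φ) :
    Tendsto (fun m : ℤ ↦ ∫ x in (0 : ℝ)..(1 / 2), cos (4 * π * x) • conv heav (phimDyadic φ m) x)
      atBot (𝓝 (1 / (3 * π * Complex.I) * ∫ t in Iic 0, e2pi t * φ t)) := by
  have h_weight : Continuous fun x : ℝ ↦ cos (4 * π * x) • e2pi x :=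
    Continuous.smul (continuous_cos.comp (continuous_const_mul _)) continuous_e2pi
  have h_lim := tendsto_intervalIntegral_mul_comp_mul_nhds_zero h_weight
    (continuous_setIntegral_Iic_e2pi_mul hφ) 0 (1 / 2)
  rw [integral_cos_smul_e2pi] at h_lim
  simpa only [conv_heav_phimDyadic, comp_def, smul_mul_assoc] using
    h_lim.comp (tendsto_zpow_atBot_nhds_zero one_lt_two)

/-- key step of the BMO unboundedness: for non-degenerate `φ ∈ L¹` and
`g_m = h∗φ_m` (`m ≤ -2`), every family of affine functions `Q_m(x) = α_m x + β_m` satisfies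
`∫_0^{1/2} (Σ_{m ≤ -2} |g_m(x) - Q_m(x)|²)^{1/2} dx = ∞`. -/
theorem statement18 (φ : ℝ → ℂ) (hInt : Integrable φ)
    (hnd : (∫ t in Set.Iic (0:ℝ), e2pi t * φ t) ≠ 0)
    (α β : {m : ℤ // m ≤ -2} → ℂ) :
    ∫⁻ x in Set.Icc (0:ℝ) (1/2),
        (∑' m : {m : ℤ // m ≤ -2},
          (‖conv heav (phimDyadic φ (m : ℤ)) x - (α m * (x : ℂ) + β m)‖₊ : ℝ≥0∞) ^ 2)
            ^ (1/2 : ℝ)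
      = ∞ := by
  by_contra h_finite
  have h_cont (m : ℤ) := continuous_conv_heav_phimDyadic hInt m
  have h_dist : Tendsto (fun m : {m : ℤ // m ≤ -2} ↦ ∫⁻ x in Icc (0 : ℝ) (1 / 2),
      ‖conv heav (phimDyadic φ m) x - (α m * x + β m)‖ₑ) cofinite (𝓝 0) := by
    refine tendsto_cofinite_lintegral_zero_of_lintegral_rpow_tsum_ne_top one_le_two
      (fun m ↦ ?_) (by simpa only [ENNReal.rpow_two] using! h_finite)
    exact Continuous.aemeasurable (by have := h_cont m; fun_prop)
  have h_test (m : {m : ℤ // m ≤ -2}) :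
      ‖∫ x in (0 : ℝ)..(1 / 2), cos (4 * π * x) • conv heav (phimDyadic φ m) x‖ₑ ≤
        ∫⁻ x in Icc (0 : ℝ) (1 / 2), ‖conv heav (phimDyadic φ m) x - (α m * x + β m)‖ₑ := by
    have h_period : cos (4 * π * (1 / 2)) = 1 := by
      rw [show 4 * π * (1 / 2) = 2 * π by ring, cos_two_pi]
    simpa [mul_comm (α m)] using enorm_integral_cos_smul_le_lintegral_enorm_sub_affine
      (by positivity) h_period one_half_pos.le (h_cont m) (α m) (β m)
  have h_zero := tendsto_zero_iff_enorm_tendsto_zero.2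
    (tendsto_of_tendsto_of_tendsto_of_le_of_le tendsto_const_nhds h_dist (fun _ ↦ zero_le) h_test)
  have h_lim := (tendsto_integral_cos_smul_conv_heav_phimDyadic hInt).comp
    (tendsto_subtype_val_cofinite_atBot (-2))
  have : Infinite {m : ℤ // m ≤ -2} := (Iic_infinite (-2 : ℤ)).to_subtype
  exact mul_ne_zero (by simp [pi_ne_zero]) hnd (tendsto_nhds_unique h_lim h_zero)
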